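/- arXiv:0908.1872 — 4 statements merged into one kernel-verified Lean document; each statement's English description precedes it below -/
import Mathlib

section
/- Every ℝ-algebra homomorphism from C^∞(ℝ^p, ℝ) ⊗_ℝ Λ(ℝ^q) to ℝ is the composition of evaluation with the augmentation: for every ℝ-algebra homomorphism φ : C^∞(ℝ^p, ℝ) ⊗_ℝ Λ(ℝ^q) → ℝ there exists a unique point x ∈ ℝ^p such that φ(f ⊗ w) = f(x)·ε(w) for all f ∈ C^∞(ℝ^p, ℝ) and w ∈ Λ(ℝ^q). (This is the 'super Milnor exercise' for the superdomain ℝ^{p|q}, whose algebra of global sections is C^∞(ℝ^p, ℝ) ⊗ Λ(ℝ^q).) -/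
open scoped Manifold TensorProduct

noncomputable section

/-- The algebra of smooth real-valued functions on `ℝ^p`. -/
abbrev SmoothFn (p : ℕ) : Type :=
  ContMDiffMap (𝓡 p) 𝓘(ℝ, ℝ) (EuclideanSpace ℝ (Fin p)) ℝ (⊤ : ℕ∞)

/-- The coordinate functions on `ℝ^p`. -/
def coordFn (p : ℕ) (i : Fin p) : SmoothFn p :=
  ⟨fun x => x i, (EuclideanSpace.proj i : EuclideanSpace ℝ (Fin p) →L[ℝ] ℝ).contMDiff⟩

theorem exists_zero_of_map_zero (p : ℕ) (ψ : SmoothFn p →ₐ[ℝ] ℝ) (g : SmoothFn p)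
    (hg : ψ g = 0) : ∃ y, g y = 0 := by
  by_contra! h
  let k : SmoothFn p := ⟨fun x => (g x)⁻¹, by
    have h1 : ContDiff ℝ (⊤ : ℕ∞) (fun x => g x) := g.contMDiff.contDiff
    exact (h1.inv h).contMDiff⟩
  have hk : g * k = 1 := by
    ext x
    exact mul_inv_cancel₀ (h x)
  have h2 := congrArg ψ hk
  rw [map_mul, hg, zero_mul, map_one] at h2
  exact zero_ne_one h2

theorem milnor_eval (p : ℕ) (ψ : SmoothFn p →ₐ[ℝ] ℝ) (f : SmoothFn p) :
    ψ f = f (WithLp.toLp 2 fun i => ψ (coordFn p i)) := by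
  let c : ℝ → SmoothFn p := fun r => algebraMap ℝ (SmoothFn p) r
  have hc : ∀ r y, c r y = r := fun r y => rfl
  have hψ : ∀ r, ψ (c r) = r := fun r => by simp [c]
  obtain ⟨y, hy⟩ := exists_zero_of_map_zero p ψ
    ((f - c (ψ f)) ^ 2 + ∑ i, (coordFn p i - c (ψ (coordFn p i))) ^ 2)
    (by simp [hψ])
  let ev : SmoothFn p →+* ℝ := ContMDiffMap.evalRingHom y
  have hev : ∀ u : SmoothFn p, ev u = u y := fun u => rfl
  rw [← hev] at hy
  simp only [map_add, map_pow, map_sub, map_sum] at hy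
  simp only [hev, hc] at hy
  have hs : 0 ≤ ∑ i, (coordFn p i y - ψ (coordFn p i)) ^ 2 :=
    Finset.sum_nonneg fun i _ => sq_nonneg _
  have h1 : (f y - ψ f) ^ 2 = 0 := by nlinarith [sq_nonneg (f y - ψ f)]
  have h2 : ∑ i, (coordFn p i y - ψ (coordFn p i)) ^ 2 = 0 := by
    nlinarith [sq_nonneg (f y - ψ f)]
  rw [Finset.sum_eq_zero_iff_of_nonneg fun i _ => sq_nonneg _] at h2
  have h3 : y = WithLp.toLp 2 fun i => ψ (coordFn p i) := by
    ext i
    have h4 := h2 i (Finset.mem_univ i)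
    exact sub_eq_zero.mp (pow_eq_zero_iff two_ne_zero |>.mp h4)
  rw [← h3]
  exact (sub_eq_zero.mp (pow_eq_zero_iff two_ne_zero |>.mp h1)).symm

theorem exterior_hom (q : ℕ) (χ : ExteriorAlgebra ℝ (Fin q → ℝ) →ₐ[ℝ] ℝ) :
    χ = ExteriorAlgebra.algebraMapInv := by
  apply ExteriorAlgebra.hom_ext
  ext1 i
  ext
  have h (χ : ExteriorAlgebra ℝ (Fin q → ℝ) →ₐ[ℝ] ℝ) (m) : χ (ExteriorAlgebra.ι ℝ m) = 0 :=
    mul_self_eq_zero.mp (ExteriorAlgebra.comp_ι_sq_zero χ m)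
  simp [h]

/-- Super Milnor's exercise for the superdomain `ℝ^{p|q}`: every `ℝ`-algebra homomorphism
from `C^∞(ℝ^p, ℝ) ⊗ Λ(ℝ^q)` to `ℝ` is the tensor product of an evaluation with the
augmentation, for a unique point `x ∈ ℝ^p`. -/
theorem super_milnor_exercise (p q : ℕ)
    (φ : (SmoothFn p ⊗[ℝ] ExteriorAlgebra ℝ (Fin q → ℝ)) →ₐ[ℝ] ℝ) :
    ∃! x : EuclideanSpace ℝ (Fin p),
      ∀ (f : SmoothFn p) (w : ExteriorAlgebra ℝ (Fin q → ℝ)),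
        φ (f ⊗ₜ[ℝ] w) = f x * ExteriorAlgebra.algebraMapInv w := by
  have key : ∀ (f : SmoothFn p) (w : ExteriorAlgebra ℝ (Fin q → ℝ)),
      φ (f ⊗ₜ[ℝ] w) = φ (f ⊗ₜ[ℝ] 1) * ExteriorAlgebra.algebraMapInv w := by
    intro f w
    rw [← exterior_hom q (φ.comp Algebra.TensorProduct.includeRight)]
    simp only [AlgHom.comp_apply, Algebra.TensorProduct.includeRight_apply]
    rw [← map_mul, Algebra.TensorProduct.tmul_mul_tmul, mul_one, one_mul]
  let ψ : SmoothFn p →ₐ[ℝ] ℝ := φ.comp Algebra.TensorProduct.includeLeft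
  have hψ : ∀ f, φ (f ⊗ₜ[ℝ] 1) = ψ f := fun f => rfl
  refine ⟨WithLp.toLp 2 fun i => ψ (coordFn p i), ?_, ?_⟩
  · intro f w
    rw [key, hψ, milnor_eval p ψ f]
  · intro y hy
    ext i
    have h := hy (coordFn p i) 1
    rw [map_one, mul_one, hψ] at h
    exact h.symm
end
end

section
/- (A-points and distributions with point support.) Let x ∈ ℝ^p and k ∈ ℕ. (i) If (A, N) is a Weil algebra with N^{k+1} = 0, φ : C^∞(ℝ^p, ℝ) → A is an ℝ-algebra homomorphism with base point x (i.e. φ(f) − f(x)·1_A ∈ N for all f), and ω : A → ℝ is ℝ-linear, then the linear functional ω ∘ φ vanishes on the ideal power I_x^{k+1}. (ii) Conversely, every ℝ-linear functional v : C^∞(ℝ^p, ℝ) → ℝ vanishing on I_x^{k+1} is of the form ω ∘ φ for some Weil algebra (A, N) with N^{k+1} = 0, some ℝ-algebra homomorphism φ : C^∞(ℝ^p, ℝ) → A with base point x, and some ℝ-linear ω : A → ℝ. -/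
open scoped Manifold

noncomputable section

/-- Evaluation at a point, as an `ℝ`-algebra homomorphism `C^∞(ℝ^p, ℝ) → ℝ`. -/
def evalAlgHom {p : ℕ} (x : EuclideanSpace ℝ (Fin p)) : SmoothFn p →ₐ[ℝ] ℝ where
  toFun f := f x
  map_one' := rfl
  map_mul' _ _ := rfl
  map_zero' := rfl
  map_add' _ _ := rfl
  commutes' _ := rfl

/-- A Weil algebra: a finite-dimensional commutative unital `ℝ`-algebra `A` together with a
nilpotent ideal `N` such that `A = ℝ·1 ⊕ N` as real vector spaces. -/
structure WeilAlgebra where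
  carrier : Type
  [instCommRing : CommRing carrier]
  [instAlgebra : Algebra ℝ carrier]
  [instFinDim : FiniteDimensional ℝ carrier]
  N : Ideal carrier
  nilpotent : IsNilpotent N
  compl : IsCompl (Submodule.span ℝ {(1 : carrier)}) (Submodule.restrictScalars ℝ N)

attribute [instance] WeilAlgebra.instCommRing WeilAlgebra.instAlgebra WeilAlgebra.instFinDim

theorem contDiff_param_integral_nat {E : Type} [NormedAddCommGroup E] [NormedSpace ℝ E]
    [ProperSpace E] (n : ℕ) : ∀ {G : Type} [NormedAddCommGroup G] [NormedSpace ℝ G]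
    (F : E → ℝ → G), ContDiff ℝ n (Function.uncurry F) →
    ContDiff ℝ n (fun x => ∫ t in (0:ℝ)..1, F x t) := by
  induction n with
  | zero =>
    intro G _ _ F hF
    have hc : Continuous (Function.uncurry F) := hF.continuous
    exact contDiff_zero.2
      (intervalIntegral.continuous_parametric_intervalIntegral_of_continuous' hc 0 1)
  | succ n ih =>
    intro G _ _ F hF
    have hF' : ContDiff ℝ ((n : WithTop ℕ∞) + 1) (Function.uncurry F) := by exact_mod_cast hF
    let F' : E → ℝ → (E →L[ℝ] G) := fun x t =>
      (fderiv ℝ (Function.uncurry F) (x, t)).comp (ContinuousLinearMap.inl ℝ E ℝ)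
    have hF'c : ContDiff ℝ n (Function.uncurry F') := by
      have h1 : ContDiff ℝ n (fderiv ℝ (Function.uncurry F)) :=
        hF'.fderiv_right le_rfl
      exact h1.clm_comp contDiff_const
    have hcont : Continuous (Function.uncurry F) := hF.continuous
    have hcont' : Continuous (Function.uncurry F') := hF'c.continuous
    have hsl : ∀ x, Continuous (F x) := fun x => hcont.comp (Continuous.prodMk_right x)
    have hsl' : ∀ x, Continuous (F' x) := fun x => hcont'.comp (Continuous.prodMk_right x)
    have hd : ∀ x t, HasFDerivAt (fun y => F y t) (F' x t) x := by
      intro x t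
      have h1 : HasFDerivAt (Function.uncurry F) (fderiv ℝ (Function.uncurry F) (x, t)) (x, t) :=
        (hF'.differentiable (by simp) (x, t)).hasFDerivAt
      have h2 : HasFDerivAt (fun y : E => (y, t)) (ContinuousLinearMap.inl ℝ E ℝ) x :=
        hasFDerivAt_prodMk_left x t
      exact HasFDerivAt.comp x h1 h2
    have key : ContDiff ℝ ((n : WithTop ℕ∞) + 1) (fun x => ∫ t in (0:ℝ)..1, F x t) := by
      refine contDiff_succ_iff_hasFDerivAt.2 ⟨fun x => ∫ t in (0:ℝ)..1, F' x t, ih F' hF'c, ?_⟩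
      intro x
      have hK : IsCompact (Metric.closedBall x 1 ×ˢ Set.uIcc (0:ℝ) 1) :=
        (isCompact_closedBall x 1).prod isCompact_uIcc
      obtain ⟨C, hC⟩ := hK.exists_bound_of_continuousOn hcont'.continuousOn
      refine intervalIntegral.hasFDerivAt_integral_of_dominated_of_fderiv_le
        (s := Metric.closedBall x 1) (bound := fun _ => C) (F' := F')
        (Metric.closedBall_mem_nhds x one_pos)
        (Filter.Eventually.of_forall fun y => (hsl y).aestronglyMeasurable)
        ((hsl x).intervalIntegrable 0 1) (hsl' x).aestronglyMeasurable ?_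
        (by simp) ?_
      · refine Filter.Eventually.of_forall fun t ht y hy => ?_
        exact hC (y, t) ⟨hy, Set.uIoc_subset_uIcc ht⟩
      · exact Filter.Eventually.of_forall fun t _ y _ => hd y t
    exact_mod_cast key

theorem contDiff_param_integral {E G : Type} [NormedAddCommGroup E] [NormedSpace ℝ E]
    [ProperSpace E] [NormedAddCommGroup G] [NormedSpace ℝ G]
    (F : E → ℝ → G) (hF : ContDiff ℝ (⊤ : ℕ∞) (Function.uncurry F)) :
    ContDiff ℝ (⊤ : ℕ∞) (fun x => ∫ t in (0:ℝ)..1, F x t) := by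
  refine contDiff_infty.2 fun n => contDiff_param_integral_nat n F (contDiff_infty.1 hF n)

/-- The Hadamard lemma. -/
theorem hadamard_lemma {p : ℕ} (x : EuclideanSpace ℝ (Fin p))
    (f : EuclideanSpace ℝ (Fin p) → ℝ) (hf : ContDiff ℝ (⊤ : ℕ∞) f) :
    ∃ g : Fin p → EuclideanSpace ℝ (Fin p) → ℝ, (∀ i, ContDiff ℝ (⊤ : ℕ∞) (g i)) ∧
      ∀ y, f y = f x + ∑ i, g i y * (y i - x i) := by
  have hf' : ContDiff ℝ (⊤ : ℕ∞) (fderiv ℝ f) := hf.fderiv_right (by simp)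
  refine ⟨fun i y => ∫ t in (0:ℝ)..1,
    fderiv ℝ f (x + t • (y - x)) (EuclideanSpace.single i 1), fun i => ?_, fun y => ?_⟩
  · apply contDiff_param_integral
    have h1 : ContDiff ℝ (⊤ : ℕ∞) (fun q : EuclideanSpace ℝ (Fin p) × ℝ =>
        x + q.2 • (q.1 - x)) := by fun_prop
    exact (hf'.comp h1).clm_apply contDiff_const
  · have hline : Continuous (fun t : ℝ => x + t • (y - x)) := by fun_prop
    have hd : ∀ t : ℝ, HasDerivAt (fun t : ℝ => f (x + t • (y - x)))
        (fderiv ℝ f (x + t • (y - x)) (y - x)) t := by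
      intro t
      have h1 : HasDerivAt (fun t : ℝ => x + t • (y - x)) (y - x) t := by
        simpa using ((hasDerivAt_id t).smul_const (y - x)).const_add x
      have h2 := ((hf.differentiable (by simp)) (x + t • (y - x))).hasFDerivAt
      exact h2.comp_hasDerivAt t h1
    have hcont : ∀ w, Continuous (fun t : ℝ => fderiv ℝ f (x + t • (y - x)) w) := fun w =>
      (hf'.continuous.comp hline).clm_apply continuous_const
    have h3 := intervalIntegral.integral_eq_sub_of_hasDerivAt (a := 0) (b := 1)
      (fun t _ => hd t) ((hcont _).intervalIntegrable 0 1)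
    have h4 : (y - x) = ∑ i, (y i - x i) • (EuclideanSpace.single i (1:ℝ)) := by
      ext j
      simp [Finset.sum_apply, Pi.single_apply]
    have h5 : ∀ t : ℝ, fderiv ℝ f (x + t • (y - x)) (y - x) =
        ∑ i, fderiv ℝ f (x + t • (y - x)) (EuclideanSpace.single i (1:ℝ)) * (y i - x i) := by
      intro t
      conv_lhs => rw [h4, map_sum]
      refine Finset.sum_congr rfl fun i _ => ?_
      rw [map_smul, smul_eq_mul, mul_comm, ← h4]
    simp_rw [h5] at h3
    rw [intervalIntegral.integral_finsetSum] at h3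
    · simp only [intervalIntegral.integral_mul_const, one_smul, zero_smul, add_zero,
        add_sub_cancel] at h3
      rw [h3]; ring
    · intro i _
      exact ((hcont _).mul continuous_const).intervalIntegrable 0 1

/-- The shifted coordinate function. -/
def shiftCoord {p : ℕ} (x : EuclideanSpace ℝ (Fin p)) (i : Fin p) : SmoothFn p :=
  ⟨fun y => y i - x i, ContDiff.contMDiff (by fun_prop)⟩

theorem mem_ker_eval {p : ℕ} (x : EuclideanSpace ℝ (Fin p)) (f : SmoothFn p) :
    f ∈ RingHom.ker (evalAlgHom x).toRingHom ↔ f x = 0 := Iff.rfl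

theorem ker_eval_fg {p : ℕ} (x : EuclideanSpace ℝ (Fin p)) :
    (RingHom.ker (evalAlgHom x).toRingHom).FG := by
  classical
  refine ⟨Finset.univ.image (shiftCoord x), le_antisymm ?_ ?_⟩
  · refine Ideal.span_le.2 ?_
    intro f hf
    simp only [Finset.coe_image, Finset.coe_univ, Set.image_univ, Set.mem_range] at hf
    obtain ⟨i, rfl⟩ := hf
    exact sub_self (x i)
  · intro f hf
    obtain ⟨g, hg, h⟩ := hadamard_lemma x f f.contMDiff.contDiff
    have hf0 : f x = 0 := hf
    let G : Fin p → SmoothFn p := fun i => ⟨g i, (hg i).contMDiff⟩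
    have : f = ∑ i, G i * shiftCoord x i := by
      ext y
      rw [h y, hf0, zero_add]
      have := map_sum (evalAlgHom y)
        (fun i => G i * shiftCoord x i) Finset.univ
      exact this.symm
    rw [this]
    refine Ideal.sum_mem _ fun i _ => Ideal.mul_mem_left _ _ (Ideal.subset_span ?_)
    simp

theorem finite_quot_pow {R : Type} [CommRing R] [Algebra ℝ R] (e : R →ₐ[ℝ] ℝ)
    (hI : (RingHom.ker e.toRingHom).FG) (n : ℕ) :
    ∃ S : Set R, S.Finite ∧ Submodule.span ℝ S ⊔
      Submodule.restrictScalars ℝ ((RingHom.ker e.toRingHom) ^ n) = ⊤ := by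
  induction n with
  | zero => exact ⟨∅, Set.finite_empty, by simp [Ideal.one_eq_top]⟩
  | succ n ih =>
    obtain ⟨S, hS, h⟩ := ih
    obtain ⟨T, hT⟩ := hI.pow (n := n)
    refine ⟨S ∪ T, hS.union T.finite_toSet, ?_⟩
    rw [eq_top_iff, ← h]
    refine sup_le (le_sup_of_le_left (Submodule.span_mono Set.subset_union_left)) ?_
    intro f hf
    replace hf : f ∈ Ideal.span (T : Set R) := by
      rw [show Ideal.span (T : Set R) = _ from hT]; exact hf
    induction hf using Submodule.span_induction with
    | mem s hs => exact Submodule.mem_sup_left (Submodule.subset_span (Or.inr hs))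
    | zero => exact zero_mem _
    | add a b _ _ ha hb => exact add_mem ha hb
    | smul a s hs' hs =>
      have h1 : a • s = e a • s + (a - algebraMap ℝ R (e a)) * s := by
        rw [Algebra.smul_def (e a) s, smul_eq_mul]; ring
      rw [h1]
      refine add_mem (Submodule.smul_mem _ _ hs) (Submodule.mem_sup_right ?_)
      change _ ∈ RingHom.ker e.toRingHom ^ (n + 1)
      rw [pow_succ']
      refine Ideal.mul_mem_mul ?_ (hT ▸ hs')
      rw [RingHom.mem_ker]
      change e (a - algebraMap ℝ R (e a)) = 0
      simp

theorem finiteDim_quot_pow {R : Type} [CommRing R] [Algebra ℝ R] (e : R →ₐ[ℝ] ℝ)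
    (hI : (RingHom.ker e.toRingHom).FG) (n : ℕ) :
    FiniteDimensional ℝ (R ⧸ (RingHom.ker e.toRingHom) ^ n) := by
  obtain ⟨S, hS, h⟩ := finite_quot_pow e hI n
  let q : R →ₗ[ℝ] (R ⧸ (RingHom.ker e.toRingHom) ^ n) :=
    (Ideal.Quotient.mkₐ ℝ ((RingHom.ker e.toRingHom) ^ n)).toLinearMap
  have hq : Function.Surjective q := Ideal.Quotient.mk_surjective
  refine Module.finite_def.2 (Submodule.fg_def.2 ⟨q '' S, hS.image q, ?_⟩)
  rw [Submodule.span_image, eq_top_iff, ← LinearMap.range_eq_top.2 hq, LinearMap.range_eq_map,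
    ← h, Submodule.map_sup]
  refine sup_le le_rfl ?_
  rintro _ ⟨f, hf, rfl⟩
  have : q f = 0 := Ideal.Quotient.eq_zero_iff_mem.2 hf
  rw [this]
  exact zero_mem _

/-- The jet algebra of order `k` at the kernel of a character with finitely generated kernel. -/
def jetWeil {R : Type} [CommRing R] [Algebra ℝ R] (e : R →ₐ[ℝ] ℝ)
    (hI : (RingHom.ker e.toRingHom).FG) (k : ℕ) : WeilAlgebra :=
  haveI := finiteDim_quot_pow e hI (k + 1)
  { carrier := R ⧸ (RingHom.ker e.toRingHom) ^ (k + 1)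
    N := (RingHom.ker e.toRingHom).map (Ideal.Quotient.mk _)
    nilpotent := ⟨k + 1, by rw [← Ideal.map_pow, Ideal.map_quotient_self]; rfl⟩
    compl := by
      constructor
      · rw [Submodule.disjoint_def]
        intro a ha haN
        obtain ⟨c, rfl⟩ := Submodule.mem_span_singleton.1 ha
        replace haN : c • (1 : R ⧸ (RingHom.ker e.toRingHom) ^ (k + 1)) ∈
          (RingHom.ker e.toRingHom).map (Ideal.Quotient.mk _) := haN
        obtain ⟨i, hi, h⟩ := (Ideal.mem_map_iff_of_surjective _
          Ideal.Quotient.mk_surjective).1 haN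
        have h2 : i - algebraMap ℝ R c ∈ RingHom.ker e.toRingHom ^ (k + 1) := by
          rw [← Ideal.Quotient.eq, h, Algebra.smul_def, mul_one]
          rfl
        have h3 : e (i - algebraMap ℝ R c) = 0 := Ideal.pow_le_self (by simp) h2
        have h4 : e i = 0 := hi
        have h5 : c = 0 := by simpa [h4] using h3
        rw [h5, zero_smul]
      · rw [codisjoint_iff, eq_top_iff]
        intro a _
        obtain ⟨f, rfl⟩ := Ideal.Quotient.mk_surjective a
        have h1 : Ideal.Quotient.mk (RingHom.ker e.toRingHom ^ (k + 1)) f =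
            e f • (1 : R ⧸ (RingHom.ker e.toRingHom) ^ (k + 1)) +
            Ideal.Quotient.mk _ (f - algebraMap ℝ R (e f)) := by
          rw [map_sub, Algebra.smul_def, mul_one]
          exact (add_sub_cancel _ _).symm
        rw [h1]
        refine Submodule.add_mem_sup (Submodule.smul_mem _ _ (Submodule.mem_span_singleton_self _))
          (Ideal.mem_map_of_mem _ ?_)
        change e (f - algebraMap ℝ R (e f)) = 0
        simp }

/-- `A`-points and distributions with point support: (i) if `(A, N)` is a Weil algebra with
`N^{k+1} = 0`, `φ : C^∞(ℝ^p, ℝ) → A` has base point `x`, and `ω : A → ℝ` is linear, then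
`ω ∘ φ` kills `I_x^{k+1}`; (ii) conversely, every linear functional killing `I_x^{k+1}` is of
this form. -/
theorem A_points_and_distributions (p k : ℕ) (x : EuclideanSpace ℝ (Fin p)) :
    (∀ (W : WeilAlgebra), W.N ^ (k + 1) = ⊥ →
      ∀ (φ : SmoothFn p →ₐ[ℝ] W.carrier),
        (∀ f : SmoothFn p, φ f - algebraMap ℝ W.carrier (f x) ∈ W.N) →
        ∀ (ω : W.carrier →ₗ[ℝ] ℝ),
          ∀ f ∈ (RingHom.ker (evalAlgHom x).toRingHom) ^ (k + 1), ω (φ f) = 0) ∧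
    (∀ v : SmoothFn p →ₗ[ℝ] ℝ,
      (∀ f ∈ (RingHom.ker (evalAlgHom x).toRingHom) ^ (k + 1), v f = 0) →
      ∃ (W : WeilAlgebra) (φ : SmoothFn p →ₐ[ℝ] W.carrier) (ω : W.carrier →ₗ[ℝ] ℝ),
        W.N ^ (k + 1) = ⊥ ∧
        (∀ f : SmoothFn p, φ f - algebraMap ℝ W.carrier (f x) ∈ W.N) ∧
        (∀ f : SmoothFn p, v f = ω (φ f))) := by
  constructor
  · intro W hN φ hφ ω f hf
    have h1 : (RingHom.ker (evalAlgHom x).toRingHom).map φ.toRingHom ≤ W.N := by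
      rw [Ideal.map_le_iff_le_comap]
      intro g hg
      have hg0 : g x = 0 := hg
      have := hφ g
      rw [hg0, map_zero, sub_zero] at this
      exact this
    have h2 : φ f ∈ W.N ^ (k + 1) := by
      refine Ideal.pow_right_mono h1 (k + 1) ?_
      rw [← Ideal.map_pow]
      exact Ideal.mem_map_of_mem φ.toRingHom hf
    rw [hN, Ideal.mem_bot] at h2
    rw [h2, map_zero]
  · intro v hv
    refine ⟨jetWeil (evalAlgHom x) (ker_eval_fg x) k,
      Ideal.Quotient.mkₐ ℝ ((RingHom.ker (evalAlgHom x).toRingHom) ^ (k + 1)),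
      (Submodule.liftQ (Submodule.restrictScalars ℝ
        ((RingHom.ker (evalAlgHom x).toRingHom) ^ (k + 1))) v hv :), ?_, ?_, fun f => rfl⟩
    · have h : (Ideal.map (Ideal.Quotient.mk ((RingHom.ker (evalAlgHom x).toRingHom) ^ (k + 1)))
          (RingHom.ker (evalAlgHom x).toRingHom)) ^ (k + 1) = ⊥ := by
        rw [← Ideal.map_pow, Ideal.map_quotient_self]
      exact h
    · intro f
      have h : f - algebraMap ℝ (SmoothFn p) (f x) ∈ RingHom.ker (evalAlgHom x).toRingHom :=
        sub_self (f x)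
      exact Ideal.mem_map_of_mem
        (Ideal.Quotient.mk ((RingHom.ker (evalAlgHom x).toRingHom) ^ (k + 1))) h
end
end

section
/- (Structure of point-supported distributions of order k.) Let x ∈ ℝ^p and k ∈ ℕ, and let v : C^∞(ℝ^p, ℝ) → ℝ be an ℝ-linear functional vanishing on the ideal power I_x^{k+1}. Then there exist real coefficients a_ν, indexed by the multi-indices ν ∈ ℕ^p with |ν| ≤ k, such that v(f) = Σ_{|ν| ≤ k} a_ν (∂^ν f)(x) for all f ∈ C^∞(ℝ^p, ℝ), where ∂^ν denotes the iterated partial derivative corresponding to ν. -/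
open scoped Manifold

noncomputable section

/-- The partial derivative of `f : ℝ^p → ℝ` in the `i`-th coordinate direction. -/
def pderivCoord (p : ℕ) (i : Fin p) (f : EuclideanSpace ℝ (Fin p) → ℝ) :
    EuclideanSpace ℝ (Fin p) → ℝ :=
  fun y => fderiv ℝ f y (EuclideanSpace.single i 1)

/-- The iterated partial derivative `∂^ν` associated with a multi-index `ν ∈ ℕ^p`. -/
def multiPDeriv (p : ℕ) (ν : Fin p → ℕ) (f : EuclideanSpace ℝ (Fin p) → ℝ) :
    EuclideanSpace ℝ (Fin p) → ℝ :=
  ((List.ofFn fun i : Fin p => (pderivCoord p i)^[ν i]).foldr (· ∘ ·) id) f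


section helpers
open scoped ContDiff Topology
open MeasureTheory

/-- Weighted average of `h` over the segment from `x` to `y`. -/
def segAvg {E F : Type} [NormedAddCommGroup E] [NormedSpace ℝ E]
    [NormedAddCommGroup F] [NormedSpace ℝ F] (x : E) (n : ℕ) (h : E → F) (y : E) : F :=
  ∫ t in (0:ℝ)..1, t ^ n • h (x + t • (y - x))

theorem segAvg_hasFDerivAt {E F : Type} [NormedAddCommGroup E] [NormedSpace ℝ E]
    [FiniteDimensional ℝ E]
    [NormedAddCommGroup F] [NormedSpace ℝ F] (x : E) (n : ℕ) (h : E → F)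
    (hh : ContDiff ℝ 1 h) (y : E) :
    HasFDerivAt (segAvg x n h) (segAvg x (n + 1) (fderiv ℝ h) y) y := by
  have hc : Continuous h := hh.continuous
  have hc' : Continuous (fderiv ℝ h) := hh.continuous_fderiv one_ne_zero
  have hd : Differentiable ℝ h := hh.differentiable one_ne_zero
  have : ProperSpace E := FiniteDimensional.proper ℝ E
  have hcont : Continuous (fun q : E × ℝ => q.2 ^ (n+1) • fderiv ℝ h (x + q.2 • (q.1 - x))) := by
    fun_prop
  obtain ⟨C, hC⟩ := ((isCompact_closedBall y 1).prod (isCompact_Icc (a := (0:ℝ)) (b := 1))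
    ).exists_bound_of_continuousOn hcont.continuousOn
  refine intervalIntegral.hasFDerivAt_integral_of_dominated_of_fderiv_le
    (F := fun y t => t ^ n • h (x + t • (y - x)))
    (F' := fun y t => t ^ (n+1) • fderiv ℝ h (x + t • (y - x)))
    (bound := fun _ => C) (Metric.closedBall_mem_nhds y one_pos) ?_ ?_ ?_ ?_ ?_ ?_
  · refine Filter.Eventually.of_forall fun z => ?_
    exact Continuous.aestronglyMeasurable (by fun_prop)
  · exact Continuous.intervalIntegrable (by fun_prop) _ _
  · exact Continuous.aestronglyMeasurable (by fun_prop)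
  · refine Filter.Eventually.of_forall fun t ht z hz => ?_
    rw [Set.uIoc_of_le zero_le_one] at ht
    exact hC (z, t) ⟨hz, ht.1.le, ht.2⟩
  · exact intervalIntegrable_const
  · refine Filter.Eventually.of_forall fun t ht z hz => ?_
    have h1 : HasFDerivAt (fun z : E => x + t • (z - x)) (t • ContinuousLinearMap.id ℝ E) z :=
      (((hasFDerivAt_id z).sub_const x).const_smul t).const_add x
    have h2 := ((hd (x + t • (z - x))).hasFDerivAt.comp z h1).const_smul (t ^ n)
    have h3 : t ^ (n + 1) • fderiv ℝ h (x + t • (z - x)) =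
        t ^ n • (fderiv ℝ h (x + t • (z - x))).comp (t • ContinuousLinearMap.id ℝ E) := by
      ext w
      simp [pow_succ, mul_smul]
    rw [h3]
    exact h2

theorem segAvg_contDiff_nat {E : Type} [NormedAddCommGroup E] [NormedSpace ℝ E]
    [FiniteDimensional ℝ E] (x : E) (m : ℕ) : ∀ {F : Type}
    [NormedAddCommGroup F] [NormedSpace ℝ F] (n : ℕ) (h : E → F)
    (_ : ContDiff ℝ ∞ h), ContDiff ℝ m (segAvg x n h) := by
  induction m with
  | zero =>
    intro F _ _ n h hh
    have h1 : ContDiff ℝ 1 h := hh.of_le (by exact_mod_cast le_top)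
    rw [Nat.cast_zero, contDiff_zero]
    exact continuous_iff_continuousAt.2 fun y => (segAvg_hasFDerivAt x n h h1 y).continuousAt
  | succ m ih =>
    intro F _ _ n h hh
    have h1 : ContDiff ℝ 1 h := hh.of_le (by exact_mod_cast le_top)
    push_cast
    rw [contDiff_succ_iff_hasFDerivAt]
    exact ⟨segAvg x (n + 1) (fderiv ℝ h), ih _ _ (contDiff_infty_iff_fderiv.1 hh).2,
      segAvg_hasFDerivAt x n h h1⟩

theorem segAvg_contDiff {E : Type} [NormedAddCommGroup E] [NormedSpace ℝ E]
    [FiniteDimensional ℝ E] (x : E) {F : Type}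
    [NormedAddCommGroup F] [NormedSpace ℝ F] (n : ℕ) (h : E → F)
    (hh : ContDiff ℝ ∞ h) : ContDiff ℝ ∞ (segAvg x n h) :=
  contDiff_infty.2 fun m => segAvg_contDiff_nat x m n h hh

theorem pderivCoord_contDiff {p : ℕ} (i : Fin p) {f : EuclideanSpace ℝ (Fin p) → ℝ}
    (hf : ContDiff ℝ ∞ f) : ContDiff ℝ ∞ (pderivCoord p i f) :=
  (contDiff_infty_iff_fderiv.1 hf).2.clm_apply contDiff_const

theorem pderivCoord_segAvg {p : ℕ} (i : Fin p) (x : EuclideanSpace ℝ (Fin p)) (n : ℕ)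
    {f : EuclideanSpace ℝ (Fin p) → ℝ} (hf : ContDiff ℝ ∞ f) :
    pderivCoord p i (segAvg x n f) = segAvg x (n + 1) (pderivCoord p i f) := by
  have h1 : ContDiff ℝ 1 f := hf.of_le (by exact_mod_cast le_top)
  have hc' : Continuous (fderiv ℝ f) := h1.continuous_fderiv one_ne_zero
  funext y
  rw [pderivCoord, (segAvg_hasFDerivAt x n f h1 y).fderiv]
  unfold segAvg
  rw [ContinuousLinearMap.intervalIntegral_apply
    (Continuous.intervalIntegrable (by fun_prop) _ _)]
  rfl

/-- All derivatives of order at most `k` vanish at `x`. -/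
def VanAt {p : ℕ} (x : EuclideanSpace ℝ (Fin p)) : ℕ → (EuclideanSpace ℝ (Fin p) → ℝ) → Prop
  | 0, f => f x = 0
  | k + 1, f => f x = 0 ∧ ∀ i, VanAt x k (pderivCoord p i f)

theorem VanAt.segAvg {p : ℕ} {x : EuclideanSpace ℝ (Fin p)} (k : ℕ) :
    ∀ (n : ℕ) {f : EuclideanSpace ℝ (Fin p) → ℝ}, ContDiff ℝ ∞ f → VanAt x k f →
      VanAt x k (segAvg x n f) := by
  induction k with
  | zero =>
    intro n f _ h
    have h : f x = 0 := h
    simp [VanAt, _root_.segAvg, h]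
  | succ k ih =>
    intro n f hf h
    refine ⟨by simp [_root_.segAvg, h.1], fun i => ?_⟩
    rw [pderivCoord_segAvg i x n hf]
    exact ih _ (pderivCoord_contDiff i hf) (h.2 i)

theorem hadamard_expand {p : ℕ} (x : EuclideanSpace ℝ (Fin p))
    {f : EuclideanSpace ℝ (Fin p) → ℝ} (hf : ContDiff ℝ ∞ f) (y : EuclideanSpace ℝ (Fin p)) :
    f y - f x = ∑ i, (y i - x i) * segAvg x 0 (pderivCoord p i f) y := by
  have h1 : ContDiff ℝ 1 f := hf.of_le (by exact_mod_cast le_top)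
  have hd : Differentiable ℝ f := h1.differentiable one_ne_zero
  have hp : ∀ i, Continuous (pderivCoord p i f) := fun i => (pderivCoord_contDiff i hf).continuous
  have hder : ∀ t : ℝ, HasDerivAt (fun t : ℝ => f (x + t • (y - x)))
      (∑ i, (y i - x i) * pderivCoord p i f (x + t • (y - x))) t := by
    intro t
    have h2 : HasDerivAt (fun t : ℝ => x + t • (y - x)) (y - x) t := by
      simpa using ((hasDerivAt_id t).smul_const (y - x)).const_add x
    have h3 := (hd (x + t • (y - x))).hasFDerivAt.comp_hasDerivAt t h2
    have h4 : y - x = ∑ i, (y i - x i) • EuclideanSpace.single i (1:ℝ) := by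
      ext j
      simp [Finset.sum_apply, Pi.single_apply]
    have h6 : ∀ A : EuclideanSpace ℝ (Fin p) →L[ℝ] ℝ,
        A (y - x) = ∑ i, (y i - x i) * A (EuclideanSpace.single i 1) := by
      intro A
      conv_lhs => rw [h4]
      simp only [map_sum, map_smul, smul_eq_mul]
    rw [h6] at h3
    exact h3
  have h5 := intervalIntegral.integral_eq_sub_of_hasDerivAt (a := 0) (b := 1)
    (fun t _ => hder t) (Continuous.intervalIntegrable (by fun_prop) _ _)
  rw [intervalIntegral.integral_finsetSum
    (fun i _ => Continuous.intervalIntegrable (by fun_prop) _ _)] at h5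
  simp only [one_smul, zero_smul, add_zero, add_sub_cancel] at h5
  rw [← h5]
  refine Finset.sum_congr rfl fun i _ => ?_
  simp [segAvg]

theorem SmoothFn.cd {p : ℕ} (f : SmoothFn p) : ContDiff ℝ ∞ (f : EuclideanSpace ℝ (Fin p) → ℝ) :=
  contMDiff_iff_contDiff.1 f.contMDiff

/-- Bundle a smooth function. -/
def SmoothFn.mk' {p : ℕ} (f : EuclideanSpace ℝ (Fin p) → ℝ) (hf : ContDiff ℝ ∞ f) : SmoothFn p :=
  ⟨f, contMDiff_iff_contDiff.2 hf⟩

theorem mem_pow_of_vanAt {p : ℕ} (x : EuclideanSpace ℝ (Fin p)) (k : ℕ) :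
    ∀ f : SmoothFn p, VanAt x k f → f ∈ (RingHom.ker (evalAlgHom x).toRingHom) ^ (k + 1) := by
  induction k with
  | zero =>
    intro f h
    rw [zero_add, pow_one]
    exact h
  | succ k ih =>
    intro f h
    have key : f = ∑ i, SmoothFn.mk' (fun y => y i - x i) (by fun_prop) *
        SmoothFn.mk' (segAvg x 0 (pderivCoord p i f))
          (segAvg_contDiff x 0 _ (pderivCoord_contDiff i f.cd)) := by
      ext y
      have := hadamard_expand x f.cd y
      rw [h.1, sub_zero] at this
      rw [this]
      change _ = evalAlgHom y _
      rw [map_sum]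
      rfl
    rw [key, pow_succ']
    refine Ideal.sum_mem _ fun i _ => Ideal.mul_mem_mul ?_ (ih _ ?_)
    · rw [RingHom.mem_ker]
      exact sub_self (x i)
    · exact VanAt.segAvg k 0 (pderivCoord_contDiff i f.cd) (h.2 i)

/-- Partial derivative as an endomorphism of the smooth functions. -/
def DEnd (p : ℕ) (i : Fin p) : Module.End ℝ (SmoothFn p) where
  toFun f := SmoothFn.mk' (pderivCoord p i f) (pderivCoord_contDiff i f.cd)
  map_add' f g := by
    ext y
    have hf := f.cd.differentiable (by simp) y
    have hg := g.cd.differentiable (by simp) y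
    change fderiv ℝ ((f : EuclideanSpace ℝ (Fin p) → ℝ) + (g : EuclideanSpace ℝ (Fin p) → ℝ)) y _ = fderiv ℝ f y _ + fderiv ℝ g y _
    rw [fderiv_add hf hg]
    rfl
  map_smul' c f := by
    ext y
    have hf := f.cd.differentiable (by simp) y
    change fderiv ℝ (c • (f : EuclideanSpace ℝ (Fin p) → ℝ)) y _ = c • fderiv ℝ f y _
    rw [fderiv_const_smul hf]
    rfl

theorem DEnd_commute {p : ℕ} (i j : Fin p) : Commute (DEnd p i) (DEnd p j) := by
  refine LinearMap.ext fun f => ?_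
  ext y
  change fderiv ℝ (fun z => fderiv ℝ f z _) y _ = fderiv ℝ (fun z => fderiv ℝ f z _) y _
  have hd : DifferentiableAt ℝ (fderiv ℝ f) y :=
    (contDiff_infty_iff_fderiv.1 f.cd).2.differentiable (by simp) y
  rw [fderiv_clm_apply hd (by fun_prop), fderiv_clm_apply hd (by fun_prop)]
  have hs : IsSymmSndFDerivAt ℝ f y :=
    f.cd.contDiffAt.isSymmSndFDerivAt (by
      simpa using (WithTop.coe_le_coe.2 (le_top : (2 : ℕ∞) ≤ ⊤) : ((2 : ℕ∞) : WithTop ℕ∞) ≤ ∞))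
  simpa using hs.eq _ _

/-- Multi-index derivative as an endomorphism. -/
def mEnd (p : ℕ) (ν : Fin p → ℕ) : Module.End ℝ (SmoothFn p) :=
  ((List.finRange p).map fun i => DEnd p i ^ ν i).prod

theorem mEnd_apply {p : ℕ} (ν : Fin p → ℕ) (f : SmoothFn p) :
    (mEnd p ν f : EuclideanSpace ℝ (Fin p) → ℝ) = multiPDeriv p ν f := by
  unfold mEnd multiPDeriv
  rw [List.ofFn_eq_map]
  induction List.finRange p with
  | nil => rfl
  | cons a l ih =>
    simp only [List.map_cons, List.prod_cons, List.foldr_cons, Function.comp_apply,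
      Module.End.mul_apply]
    rw [← ih]
    generalize (List.map (fun i => DEnd p i ^ ν i) l).prod f = g
    generalize ν a = n
    induction n with
    | zero => rfl
    | succ n ihn =>
      rw [pow_succ', Function.iterate_succ_apply', ← ihn]
      rfl

theorem list_prod_update {p : ℕ} {M : Type} [Monoid M] (D : Fin p → M)
    (hD : ∀ i j, Commute (D i) (D j)) (ν : Fin p → ℕ) (j : Fin p) (l : List (Fin p))
    (hl : l.Nodup) :
    (l.map fun i => D i ^ (ν i + if i = j then 1 else 0)).prod =
      (l.map fun i => D i ^ ν i).prod * if j ∈ l then D j else 1 := by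
  induction l with
  | nil => simp
  | cons a l ih =>
    rw [List.nodup_cons] at hl
    simp only [List.map_cons, List.prod_cons]
    rw [ih hl.2]
    by_cases h : a = j
    · subst h
      have hc : Commute (D a) (l.map fun i => D i ^ ν i).prod := by
        refine Commute.list_prod_right _ _ fun b hb => ?_
        obtain ⟨i, _, rfl⟩ := List.mem_map.1 hb
        exact (hD a i).pow_right _
      simp [hl.1, pow_succ, mul_assoc, hc.eq]
    · simp [h, Ne.symm h, mul_assoc]

theorem mEnd_succ {p : ℕ} (ν : Fin p → ℕ) (j : Fin p) :
    mEnd p (fun i => ν i + if i = j then 1 else 0) = mEnd p ν * DEnd p j := by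
  unfold mEnd
  rw [list_prod_update _ DEnd_commute ν j _ (List.nodup_finRange p)]
  simp

theorem vanAt_of_mEnd {p : ℕ} (x : EuclideanSpace ℝ (Fin p)) (k : ℕ) :
    ∀ f : SmoothFn p, (∀ ν : Fin p → ℕ, ∑ i, ν i ≤ k → mEnd p ν f x = 0) → VanAt x k f := by
  induction k with
  | zero =>
    intro f h
    simpa [mEnd, VanAt] using h 0 (by simp)
  | succ k ih =>
    intro f h
    refine ⟨by simpa [mEnd] using h 0 (by simp), fun j => ?_⟩
    refine ih (DEnd p j f) fun ν hν => ?_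
    have := h (fun i => ν i + if i = j then 1 else 0)
      (by rw [Finset.sum_add_distrib]; simpa using hν)
    rwa [mEnd_succ] at this

end helpers

/-- Structure of point-supported distributions of order `k`: every linear functional on
`C^∞(ℝ^p, ℝ)` vanishing on `I_x^{k+1}` is a linear combination of iterated partial
derivatives of order at most `k` evaluated at `x`. -/
theorem point_supported_distribution_structure (p k : ℕ) (x : EuclideanSpace ℝ (Fin p))
    (v : SmoothFn p →ₗ[ℝ] ℝ)
    (hv : ∀ f ∈ (RingHom.ker (evalAlgHom x).toRingHom) ^ (k + 1), v f = 0) :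
    ∃ a : (Fin p → Fin (k + 1)) → ℝ,
      ∀ f : SmoothFn p,
        v f = ∑ ν ∈ Finset.univ.filter (fun ν : Fin p → Fin (k + 1) => ∑ i, (ν i : ℕ) ≤ k),
          a ν * multiPDeriv p (fun i => (ν i : ℕ)) f x := by
  classical
  let L : {ν : Fin p → Fin (k + 1) // ∑ i, (ν i : ℕ) ≤ k} → SmoothFn p →ₗ[ℝ] ℝ :=
    fun ν => (evalAlgHom x).toLinearMap ∘ₗ mEnd p (fun i => (ν.1 i : ℕ))
  have hmem : v ∈ Submodule.span ℝ (Set.range L) := by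
    refine mem_span_of_iInf_ker_le_ker fun f hf => ?_
    rw [LinearMap.mem_ker]
    refine hv f (mem_pow_of_vanAt x k f (vanAt_of_mEnd x k f fun ν hν => ?_))
    have hlt : ∀ i, ν i < k + 1 := fun i =>
      Nat.lt_succ_of_le ((Finset.single_le_sum (fun _ _ => Nat.zero_le _)
        (Finset.mem_univ i)).trans hν)
    rw [Submodule.mem_iInf] at hf
    exact hf ⟨fun i => ⟨ν i, hlt i⟩, hν⟩
  obtain ⟨c, hc⟩ := (Submodule.mem_span_range_iff_exists_fun ℝ).1 hmem
  refine ⟨fun ν => if h : ∑ i, (ν i : ℕ) ≤ k then c ⟨ν, h⟩ else 0, fun f => ?_⟩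
  rw [← hc, LinearMap.sum_apply,
    Finset.sum_subtype (p := fun ν : Fin p → Fin (k + 1) => ∑ i, (ν i : ℕ) ≤ k) _ (by simp)]
  refine Finset.sum_congr rfl fun ν _ => ?_
  beta_reduce
  rw [dif_pos ν.2, ← mEnd_apply]
  rfl
end
end

section
/- (Directedness of Weil algebras.) Let (A₁, N₁) and (A₂, N₂) be Weil algebras. Then there exist a Weil algebra (A, N) and surjective ℝ-algebra homomorphisms ρ₁ : A → A₁ and ρ₂ : A → A₂. -/
noncomputable section

/-- The fibre product of two Weil algebras over `ℝ`, as a subalgebra of the product. -/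
def weilFibre (W₁ W₂ : WeilAlgebra) : Subalgebra ℝ (W₁.carrier × W₂.carrier) where
  carrier := {p | ∃ r : ℝ, p.1 - algebraMap ℝ _ r ∈ W₁.N ∧ p.2 - algebraMap ℝ _ r ∈ W₂.N}
  mul_mem' := by
    rintro ⟨a, b⟩ ⟨c, d⟩ ⟨r, h1, h2⟩ ⟨s, h3, h4⟩
    refine ⟨r * s, ?_, ?_⟩
    · have := W₁.N.add_mem (W₁.N.mul_mem_left c h1) (W₁.N.mul_mem_left (algebraMap ℝ _ r) h3)
      convert this using 1
      simp only [map_mul, Prod.mk_mul_mk]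
      ring
    · have := W₂.N.add_mem (W₂.N.mul_mem_left d h2) (W₂.N.mul_mem_left (algebraMap ℝ _ r) h4)
      convert this using 1
      simp only [map_mul, Prod.mk_mul_mk]
      ring
  add_mem' := by
    rintro ⟨a, b⟩ ⟨c, d⟩ ⟨r, h1, h2⟩ ⟨s, h3, h4⟩
    refine ⟨r + s, ?_, ?_⟩
    · convert W₁.N.add_mem h1 h3 using 1
      simp only [map_add, Prod.mk_add_mk]
      ring
    · convert W₂.N.add_mem h2 h4 using 1
      simp only [map_add, Prod.mk_add_mk]
      ring
  algebraMap_mem' r := ⟨r, by simp, by simp⟩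

/-- Every element of a Weil algebra is a real number up to an element of the ideal. -/
theorem weil_decomp (W : WeilAlgebra) (a : W.carrier) :
    ∃ r : ℝ, a - algebraMap ℝ _ r ∈ W.N := by
  have h : a ∈ Submodule.span ℝ {(1 : W.carrier)} ⊔ Submodule.restrictScalars ℝ W.N := by
    rw [W.compl.sup_eq_top]; trivial
  obtain ⟨y, hy, z, hz, rfl⟩ := Submodule.mem_sup.1 h
  obtain ⟨r, rfl⟩ := Submodule.mem_span_singleton.1 hy
  refine ⟨r, ?_⟩
  rw [Algebra.algebraMap_eq_smul_one]
  simpa using hz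

theorem weil_real_mem (W : WeilAlgebra) (r : ℝ) (h : r • (1 : W.carrier) ∈ W.N) :
    r • (1 : W.carrier) = 0 :=
  Submodule.disjoint_def.1 W.compl.disjoint _
    (Submodule.smul_mem _ _ (Submodule.mem_span_singleton_self _)) h

theorem weil_nilp (W : WeilAlgebra) (a : W.carrier) (h : a ∈ W.N) : IsNilpotent a := by
  obtain ⟨n, hn⟩ := W.nilpotent
  refine ⟨n, ?_⟩
  have := Ideal.pow_mem_pow h n
  rw [hn] at this
  simpa using this

/-- The nilpotent ideal of the fibre product. -/
def weilFibreIdeal (W₁ W₂ : WeilAlgebra) : Ideal (weilFibre W₁ W₂) :=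
  (Ideal.prod W₁.N W₂.N).comap (weilFibre W₁ W₂).val

theorem mem_weilFibreIdeal (W₁ W₂ : WeilAlgebra) (x : weilFibre W₁ W₂) :
    x ∈ weilFibreIdeal W₁ W₂ ↔ x.1.1 ∈ W₁.N ∧ x.1.2 ∈ W₂.N := Iff.rfl

/-- The fibre product as a Weil algebra. -/
def weilProd (W₁ W₂ : WeilAlgebra) : WeilAlgebra where
  carrier := weilFibre W₁ W₂
  N := weilFibreIdeal W₁ W₂
  nilpotent := by
    have : IsNoetherianRing (weilFibre W₁ W₂) := isNoetherian_of_tower ℝ inferInstance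
    obtain ⟨n, hn⟩ := IsNoetherianRing.isNilpotent_nilradical (weilFibre W₁ W₂)
    refine ⟨n, ?_⟩
    have hle : weilFibreIdeal W₁ W₂ ≤ nilradical _ := by
      intro x hx
      obtain ⟨h1, h2⟩ := (mem_weilFibreIdeal W₁ W₂ x).1 hx
      obtain ⟨k, hk⟩ := weil_nilp _ _ h1
      obtain ⟨l, hl⟩ := weil_nilp _ _ h2
      refine mem_nilradical.2 ⟨k + l, Subtype.ext (Prod.ext ?_ ?_)⟩
      · simp [pow_add, hk]
      · simp [pow_add, hl]
    have := Ideal.pow_right_mono hle n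
    rw [hn] at this
    exact le_bot_iff.1 this
  compl := by
    constructor
    · rw [Submodule.disjoint_def]
      intro x hx hN
      obtain ⟨r, rfl⟩ := Submodule.mem_span_singleton.1 hx
      obtain ⟨h1, h2⟩ := (mem_weilFibreIdeal W₁ W₂ _).1 hN
      exact Subtype.ext (Prod.ext (weil_real_mem W₁ r h1) (weil_real_mem W₂ r h2))
    · rw [codisjoint_iff, eq_top_iff]
      rintro x -
      obtain ⟨r, h1, h2⟩ := x.2
      refine Submodule.mem_sup.2 ⟨r • 1, Submodule.smul_mem _ _
        (Submodule.mem_span_singleton_self _), x - r • 1, ?_, by abel⟩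
      rw [Algebra.algebraMap_eq_smul_one] at h1 h2
      exact (mem_weilFibreIdeal W₁ W₂ _).2 ⟨h1, h2⟩

/-- Directedness of Weil algebras: any two Weil algebras are simultaneously surjective images
of a third one. -/
theorem weil_algebras_directed (W₁ W₂ : WeilAlgebra) :
    ∃ (W : WeilAlgebra) (ρ₁ : W.carrier →ₐ[ℝ] W₁.carrier) (ρ₂ : W.carrier →ₐ[ℝ] W₂.carrier),
      Function.Surjective ρ₁ ∧ Function.Surjective ρ₂ := by
  refine ⟨weilProd W₁ W₂, (AlgHom.fst ℝ _ _).comp (weilFibre W₁ W₂).val,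
    (AlgHom.snd ℝ _ _).comp (weilFibre W₁ W₂).val, ?_, ?_⟩
  · intro a
    obtain ⟨r, hr⟩ := weil_decomp W₁ a
    exact ⟨⟨(a, algebraMap ℝ _ r), r, hr, by simp⟩, rfl⟩
  · intro a
    obtain ⟨r, hr⟩ := weil_decomp W₂ a
    exact ⟨⟨(algebraMap ℝ _ r, a), r, by simp, hr⟩, rfl⟩
end
end
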